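/- arXiv:2002.09652 — 4 statements merged into one kernel-verified Lean document; each statement's English description precedes it below -/
import Mathlib

section
/- Let A = [A_{i,j}]_{i,j=1}^m ∈ M_m(M_n) be positive semidefinite. Then in the Löwner ordering, (tr A)·(I_m ⊗ I_n) + I_m ⊗ (tr₁ A) − A − (tr₂ A) ⊗ I_n is positive semidefinite; equivalently, (tr A)·(I_m ⊗ I_n) − (tr₂ A) ⊗ I_n ≥ A − I_m ⊗ (tr₁ A). -/
open Matrix BigOperators ComplexOrder Kronecker

/-!
Write `Γ₁`, `Γ₂` for the partial transposes. Conjugating `A ≥ 0` by the matrices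
`(Eᵢⱼ - Eⱼᵢ) ⊗ 1` and summing gives `1 ⊗ tr₁ A - A^Γ₁ ≥ 0`; with `1 ⊗ (E_pq + E_qp)` one gets
`tr₂ A ⊗ 1 + A^Γ₂ ≥ 0`. Apply the first to `Aᵀ`, which produces
`B = 1 ⊗ (tr₁ A)ᵀ - A^Γ₂ ≥ 0`. Since `tr₂ B = tr A • 1 - tr₂ A` and `B^Γ₂ = 1 ⊗ tr₁ A - A`,
the second applied to `B` is the theorem.
-/

section PartialTrace

variable {ι ι' κ κ' R : Type*}

/-- The first partial trace `tr₁`, the sum of the diagonal blocks `A_{k,k}`; the first component of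
an index is the block index. -/
def partialTraceFst [Fintype ι] [AddCommMonoid R] (A : Matrix (ι × κ) (ι × κ') R) :
    Matrix κ κ' R :=
  of fun p q => ∑ k, A (k, p) (k, q)

/-- The second partial trace `tr₂`, the matrix of the traces of the blocks. -/
def partialTraceSnd [Fintype κ] [AddCommMonoid R] (A : Matrix (ι × κ) (ι' × κ) R) :
    Matrix ι ι' R :=
  of fun i j => ∑ r, A (i, r) (j, r)

/-- The partial transpose `Γ₁` in the first tensor factor, which exchanges the blocks `A_{i,j}` and
`A_{j,i}` without changing their entries. -/
def partialTransposeFst (A : Matrix (ι × κ) (ι' × κ') R) : Matrix (ι' × κ) (ι × κ') R :=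
  of fun x y => A (y.1, x.2) (x.1, y.2)

/-- The partial transpose `Γ₂` in the second tensor factor, which transposes every block. -/
def partialTransposeSnd (A : Matrix (ι × κ) (ι' × κ') R) : Matrix (ι × κ') (ι' × κ) R :=
  of fun x y => A (x.1, y.2) (y.1, x.2)

theorem partialTraceFst_transpose [Fintype ι] [AddCommMonoid R] (A : Matrix (ι × κ) (ι × κ') R) :
    partialTraceFst Aᵀ = (partialTraceFst A)ᵀ :=
  rfl

theorem partialTransposeFst_transpose (A : Matrix (ι × κ) (ι' × κ') R) :
    partialTransposeFst Aᵀ = partialTransposeSnd A :=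
  rfl

theorem partialTransposeSnd_partialTransposeSnd (A : Matrix (ι × κ) (ι' × κ') R) :
    partialTransposeSnd (partialTransposeSnd A) = A :=
  rfl

theorem partialTransposeSnd_sub [Sub R] (A B : Matrix (ι × κ) (ι' × κ') R) :
    partialTransposeSnd (A - B) = partialTransposeSnd A - partialTransposeSnd B :=
  rfl

theorem partialTransposeSnd_kronecker [Mul R] (A : Matrix ι ι' R) (B : Matrix κ κ' R) :
    partialTransposeSnd (A ⊗ₖ B) = A ⊗ₖ Bᵀ :=
  rfl

theorem partialTraceSnd_partialTransposeSnd [Fintype κ] [AddCommMonoid R]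
    (A : Matrix (ι × κ) (ι' × κ) R) :
    partialTraceSnd (partialTransposeSnd A) = partialTraceSnd A :=
  rfl

theorem partialTraceSnd_sub [Fintype κ] [AddCommGroup R] (A B : Matrix (ι × κ) (ι' × κ) R) :
    partialTraceSnd (A - B) = partialTraceSnd A - partialTraceSnd B := by
  ext i j
  exact Finset.sum_sub_distrib _ _

theorem partialTraceSnd_kronecker [Fintype κ] [CommSemiring R] (A : Matrix ι ι' R)
    (B : Matrix κ κ R) : partialTraceSnd (A ⊗ₖ B) = B.trace • A := by
  ext i j
  simp [partialTraceSnd, Matrix.trace, ← Finset.mul_sum, mul_comm]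

theorem trace_partialTraceFst [Fintype ι] [Fintype κ] [AddCommMonoid R]
    (A : Matrix (ι × κ) (ι × κ) R) : (partialTraceFst A).trace = A.trace :=
  (Fintype.sum_prod_type_right fun x => A x x).symm

theorem partialTraceFst_submatrix_swap [Fintype κ] [AddCommMonoid R]
    (A : Matrix (ι × κ) (ι' × κ) R) :
    partialTraceFst (A.submatrix Prod.swap Prod.swap) = partialTraceSnd A :=
  rfl

theorem partialTransposeFst_submatrix_swap (A : Matrix (ι × κ) (ι' × κ') R) :
    partialTransposeFst (A.submatrix Prod.swap Prod.swap) =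
      (partialTransposeSnd A).submatrix Prod.swap Prod.swap :=
  rfl

theorem sub_kronecker [NonUnitalNonAssocRing R] (A B : Matrix ι ι' R) (C : Matrix κ κ' R) :
    (A - B) ⊗ₖ C = A ⊗ₖ C - B ⊗ₖ C := by
  ext
  exact sub_mul _ _ _

theorem kronecker_submatrix_swap [CommMagma R] (A : Matrix ι ι' R) (B : Matrix κ κ' R) :
    (A ⊗ₖ B).submatrix Prod.swap Prod.swap = B ⊗ₖ A := by
  ext
  exact mul_comm _ _

end PartialTrace

section SingleKroneckerOne

variable {ι κ R : Type*} [Fintype ι] [DecidableEq ι] [Fintype κ] [DecidableEq κ] [CommSemiring R]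

theorem single_kronecker_one_mul_mul_single_kronecker_one_apply
    (A : Matrix (ι × κ) (ι × κ) R) (i j k l a c : ι) (b d : κ) :
    (single i j (1 : R) ⊗ₖ (1 : Matrix κ κ R) * A * single k l (1 : R) ⊗ₖ (1 : Matrix κ κ R))
      (a, b) (c, d) = if l = c then if i = a then A (j, b) (k, d) else 0 else 0 := by
  simp [Matrix.mul_apply, Fintype.sum_prod_type, single_apply, one_apply, ite_and]

theorem sum_single_kronecker_one_mul_mul_single_swap_kronecker_one
    (A : Matrix (ι × κ) (ι × κ) R) :
    ∑ i : ι, ∑ j : ι, single i j (1 : R) ⊗ₖ (1 : Matrix κ κ R) * A *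
        single j i (1 : R) ⊗ₖ (1 : Matrix κ κ R) =
      (1 : Matrix ι ι R) ⊗ₖ partialTraceFst A := by
  ext ⟨a, b⟩ ⟨c, d⟩
  simp [Matrix.sum_apply, single_kronecker_one_mul_mul_single_kronecker_one_apply,
    partialTraceFst, one_apply, Finset.sum_ite_irrel, eq_comm]

theorem sum_single_kronecker_one_mul_mul_single_kronecker_one
    (A : Matrix (ι × κ) (ι × κ) R) :
    ∑ i : ι, ∑ j : ι, single i j (1 : R) ⊗ₖ (1 : Matrix κ κ R) * A *
        single i j (1 : R) ⊗ₖ (1 : Matrix κ κ R) =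
      partialTransposeFst A := by
  ext ⟨a, b⟩ ⟨c, d⟩
  simp [Matrix.sum_apply, single_kronecker_one_mul_mul_single_kronecker_one_apply,
    partialTransposeFst]

theorem sum_single_add_smul_single_kronecker_one_conj [StarRing R] (ε : R)
    (A : Matrix (ι × κ) (ι × κ) R) :
    ∑ i : ι, ∑ j : ι, (single i j (1 : R) + ε • single j i 1) ⊗ₖ (1 : Matrix κ κ R) * A *
        ((single i j (1 : R) + ε • single j i 1) ⊗ₖ (1 : Matrix κ κ R))ᴴ =
      (1 + ε * star ε) • (1 : Matrix ι ι R) ⊗ₖ partialTraceFst A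
        + (ε + star ε) • partialTransposeFst A := by
  set E : ι → ι → Matrix (ι × κ) (ι × κ) R := fun i j => single i j (1 : R) ⊗ₖ (1 : Matrix κ κ R)
    with hE
  have expand (i j : ι) :
      (single i j (1 : R) + ε • single j i 1) ⊗ₖ (1 : Matrix κ κ R) * A *
          ((single i j (1 : R) + ε • single j i 1) ⊗ₖ (1 : Matrix κ κ R))ᴴ =
        E i j * A * E j i + (ε * star ε) • (E j i * A * E i j)
          + (ε • (E j i * A * E j i) + star ε • (E i j * A * E i j)) := by
    simp only [hE, conjTranspose_kronecker, conjTranspose_add, conjTranspose_smul,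
      conjTranspose_single, conjTranspose_one, star_one, add_kronecker, smul_kronecker,
      Matrix.add_mul, Matrix.mul_add, Matrix.smul_mul, Matrix.mul_smul]
    module
  simp only [expand, Finset.sum_add_distrib, ← Finset.smul_sum]
  rw [Finset.sum_comm (f := fun i j => E j i * A * E i j),
    Finset.sum_comm (f := fun i j => E j i * A * E j i)]
  simp only [hE, sum_single_kronecker_one_mul_mul_single_swap_kronecker_one,
    sum_single_kronecker_one_mul_mul_single_kronecker_one]
  module

end SingleKroneckerOne

section Positivity

variable {ι κ R : Type*} [Fintype ι] [DecidableEq ι]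

theorem posSemidef_of_nsmul {n R : Type*} [Field R] [PartialOrder R] [StarRing R]
    [StarOrderedRing R] {M : Matrix n n R} {k : ℕ} (hk : k ≠ 0) (h : (k • M).PosSemidef) :
    M.PosSemidef := by
  have hM : (k : ℚ≥0)⁻¹ • (k • M) = M := by
    rw [← Nat.cast_smul_eq_nsmul ℚ≥0, inv_smul_smul₀ (Nat.cast_ne_zero.mpr hk)]
  rw [← hM]
  exact h.smul zero_le

theorem posSemidef_smul_one_kronecker_partialTraceFst_add_smul_partialTransposeFst [CommRing R]
    [PartialOrder R] [StarRing R] [StarOrderedRing R] [Finite κ] {A : Matrix (ι × κ) (ι × κ) R}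
    (hA : A.PosSemidef) (ε : R) :
    ((1 + ε * star ε) • (1 : Matrix ι ι R) ⊗ₖ partialTraceFst A
      + (ε + star ε) • partialTransposeFst A).PosSemidef := by
  classical
  have := Fintype.ofFinite κ
  rw [← sum_single_add_smul_single_kronecker_one_conj]
  exact posSemidef_sum _ fun i _ => posSemidef_sum _ fun j _ => hA.mul_mul_conjTranspose_same _

variable [Field R] [PartialOrder R] [StarRing R] [StarOrderedRing R] {A : Matrix (ι × κ) (ι × κ) R}

theorem posSemidef_one_kronecker_partialTraceFst_add_partialTransposeFst [Finite κ]
    (hA : A.PosSemidef) :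
    ((1 : Matrix ι ι R) ⊗ₖ partialTraceFst A + partialTransposeFst A).PosSemidef := by
  have h_two : (1 + 1 * star 1 : R) • (1 : Matrix ι ι R) ⊗ₖ partialTraceFst A
      + (1 + star 1 : R) • partialTransposeFst A =
        2 • ((1 : Matrix ι ι R) ⊗ₖ partialTraceFst A + partialTransposeFst A) := by
    rw [star_one]
    module
  refine posSemidef_of_nsmul two_ne_zero ?_
  rw [← h_two]
  exact posSemidef_smul_one_kronecker_partialTraceFst_add_smul_partialTransposeFst hA 1

theorem posSemidef_one_kronecker_partialTraceFst_sub_partialTransposeFst [Finite κ]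
    (hA : A.PosSemidef) :
    ((1 : Matrix ι ι R) ⊗ₖ partialTraceFst A - partialTransposeFst A).PosSemidef := by
  have h_two : (1 + -1 * star (-1) : R) • (1 : Matrix ι ι R) ⊗ₖ partialTraceFst A
      + (-1 + star (-1) : R) • partialTransposeFst A =
        2 • ((1 : Matrix ι ι R) ⊗ₖ partialTraceFst A - partialTransposeFst A) := by
    rw [star_neg, star_one]
    module
  refine posSemidef_of_nsmul two_ne_zero ?_
  rw [← h_two]
  exact posSemidef_smul_one_kronecker_partialTraceFst_add_smul_partialTransposeFst hA (-1)

theorem posSemidef_partialTraceSnd_kronecker_one_add_partialTransposeSnd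
    {ι κ : Type*} [Finite ι] [Fintype κ] [DecidableEq κ] {A : Matrix (ι × κ) (ι × κ) R}
    (hA : A.PosSemidef) :
    (partialTraceSnd A ⊗ₖ (1 : Matrix κ κ R) + partialTransposeSnd A).PosSemidef := by
  have h := (posSemidef_one_kronecker_partialTraceFst_add_partialTransposeFst
    (hA.submatrix Prod.swap)).submatrix Prod.swap
  rwa [submatrix_add, Pi.add_apply, Pi.add_apply, kronecker_submatrix_swap,
    partialTraceFst_submatrix_swap, partialTransposeFst_submatrix_swap, submatrix_submatrix,
    Prod.swap_swap_eq, submatrix_id_id] at h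

theorem trace_smul_one_add_one_kron_trace1_sub_sub_trace2_kron_one_posSemidef_general
    [Fintype κ] [DecidableEq κ] (hA : A.PosSemidef) :
    (A.trace • (1 : Matrix (ι × κ) (ι × κ) R) + (1 : Matrix ι ι R) ⊗ₖ partialTraceFst A - A
      - partialTraceSnd A ⊗ₖ (1 : Matrix κ κ R)).PosSemidef := by
  set B := (1 : Matrix ι ι R) ⊗ₖ (partialTraceFst A)ᵀ - partialTransposeSnd A with hB
  have posSemidef_B : B.PosSemidef := by
    simpa only [partialTraceFst_transpose, partialTransposeFst_transpose] using
      posSemidef_one_kronecker_partialTraceFst_sub_partialTransposeFst hA.transpose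
  have traceSnd_B : partialTraceSnd B = A.trace • 1 - partialTraceSnd A := by
    rw [hB, partialTraceSnd_sub, partialTraceSnd_kronecker, trace_transpose,
      trace_partialTraceFst, partialTraceSnd_partialTransposeSnd]
  have transposeSnd_B : partialTransposeSnd B = 1 ⊗ₖ partialTraceFst A - A := by
    rw [hB, partialTransposeSnd_sub, partialTransposeSnd_kronecker, transpose_transpose,
      partialTransposeSnd_partialTransposeSnd]
  convert posSemidef_partialTraceSnd_kronecker_one_add_partialTransposeSnd posSemidef_B using 1
  rw [traceSnd_B, transposeSnd_B, sub_kronecker, smul_kronecker, one_kronecker_one]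
  abel

end Positivity

/-- **Proposition 2.2.** For a positive semidefinite block matrix `A ∈ M_m(M_n)`,
`(tr A)·(I_m ⊗ I_n) + I_m ⊗ (tr₁ A) - A - (tr₂ A) ⊗ I_n ≥ 0` in the Löwner ordering. -/
theorem trace_smul_one_add_one_kron_trace1_sub_sub_trace2_kron_one_posSemidef
    (m n : ℕ) (A : Matrix (Fin m × Fin n) (Fin m × Fin n) ℂ)
    (hA : A.PosSemidef) :
    (A.trace • (1 : Matrix (Fin m × Fin n) (Fin m × Fin n) ℂ)
      + (1 : Matrix (Fin m) (Fin m) ℂ) ⊗ₖ (Matrix.of fun p q : Fin n => ∑ k : Fin m, A (k, p) (k, q))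
      - A
      - (Matrix.of fun i j : Fin m => ∑ r : Fin n, A (i, r) (j, r)) ⊗ₖ (1 : Matrix (Fin n) (Fin n) ℂ)).PosSemidef :=
  trace_smul_one_add_one_kron_trace1_sub_sub_trace2_kron_one_posSemidef_general hA
end

section
/- If [[A_{1,1}, A_{1,2}], [A_{2,1}, A_{2,2}]] is a positive semidefinite 2×2 block matrix with n×n complex blocks, then the block matrix [[(tr A_{1,1})·I_n + A_{1,1}, (tr A_{2,1})·I_n + A_{2,1}], [(tr A_{1,2})·I_n + A_{1,2}, (tr A_{2,2})·I_n + A_{2,2}]] is positive semidefinite. -/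
open Matrix ComplexOrder

/-!
The map `X ↦ (tr X)·I + X` is copositive on block matrices of every size, not just on `2 × 2` ones.
Composing it with the transpose gives `X ↦ (tr X)·I + Xᵀ`, whose Choi matrix `I + swap` is twice
the projection onto the symmetric tensors. Hence the composite has the Kraus form
`½ ∑ₖₗ (Eₖₗ + Eₗₖ) X (Eₖₗ + Eₗₖ)ᴴ`, and each summand acts on a block matrix by a congruence.
-/

section BlockPositivity

variable {R ι κ m n : Type*} [Ring R] [PartialOrder R] [StarRing R]

/-- Positivity of a map `φ` between matrix algebras, applied entrywise to block matrices with blocks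
indexed by `ι`. For `ι = Fin k` this is `k`-positivity; linearity of `φ` is not part of the
notion. -/
def IsBlockPositive (ι : Type*) (φ : Matrix n n R → Matrix m m R) : Prop :=
  ∀ A : Matrix ι ι (Matrix n n R),
    (comp ι ι n n R A).PosSemidef → (comp ι ι m m R (A.map φ)).PosSemidef

/-- Copositivity of a map `φ` on block matrices with blocks indexed by `ι`: the positions of the
blocks are transposed, but not the blocks themselves. For `ι = Fin k` this is `k`-copositivity. -/
def IsBlockCopositive (ι : Type*) (φ : Matrix n n R → Matrix m m R) : Prop :=
  ∀ A : Matrix ι ι (Matrix n n R),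
    (comp ι ι n n R A).PosSemidef → (comp ι ι m m R (Aᵀ.map φ)).PosSemidef

theorem IsBlockPositive.isBlockCopositive {R : Type*} [CommRing R] [PartialOrder R] [StarRing R]
    {φ : Matrix n n R → Matrix m m R}
    (hφ : IsBlockPositive ι fun X => φ Xᵀ) : IsBlockCopositive ι φ := by
  intro A hA
  have hAT : (comp ι ι n n R (Aᵀ.map (·ᵀ))).PosSemidef := by
    rw [← transpose_comp]
    exact hA.transpose
  exact hφ _ hAT

theorem IsBlockPositive.sum [AddLeftMono R] {φ : κ → Matrix n n R → Matrix m m R}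
    {s : Finset κ} (hφ : ∀ k ∈ s, IsBlockPositive ι (φ k)) :
    IsBlockPositive ι fun X => ∑ k ∈ s, φ k X := by
  intro A hA
  have hsum : comp ι ι m m R (A.map fun X => ∑ k ∈ s, φ k X) =
      ∑ k ∈ s, comp ι ι m m R (A.map (φ k)) := by
    ext
    simp only [comp_apply, map_apply, Matrix.sum_apply]
  rw [hsum]
  exact posSemidef_sum s fun k hk => hφ k hk A hA

theorem IsBlockPositive.const_smul {α : Type*} [CommSemiring α] [PartialOrder α] [StarRing α]
    [StarOrderedRing α] [Algebra α R] [StarModule α R] [PosSMulMono α R]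
    {φ : Matrix n n R → Matrix m m R} (hφ : IsBlockPositive ι φ) {c : α} (hc : 0 ≤ c) :
    IsBlockPositive ι fun X => c • φ X :=
  fun A hA => (hφ A hA).smul hc

open scoped Kronecker in
theorem isBlockPositive_mul_mul_conjTranspose [Finite ι] [Finite m] [Fintype n] (B : Matrix m n R) :
    IsBlockPositive ι fun X : Matrix n n R => B * X * Bᴴ := by
  classical
  cases nonempty_fintype ι
  intro A hA
  have hcongr : comp ι ι m m R (A.map fun X : Matrix n n R => B * X * Bᴴ) =
      ((1 : Matrix ι ι R) ⊗ₖ B) * comp ι ι n n R A * ((1 : Matrix ι ι R) ⊗ₖ B)ᴴ := by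
    ext ⟨a, i⟩ ⟨b, j⟩
    simp [mul_apply, Fintype.sum_prod_type, one_apply, apply_ite]
  rw [hcongr]
  exact hA.mul_mul_conjTranspose_same _

theorem posSemidef_comp_fin_two_iff (A : Matrix (Fin 2) (Fin 2) (Matrix n n R)) :
    (comp (Fin 2) (Fin 2) n n R A).PosSemidef ↔
      (fromBlocks (A 0 0) (A 0 1) (A 1 0) (A 1 1)).PosSemidef := by
  let e : n ⊕ n ≃ Fin 2 × n :=
    (Equiv.boolProdEquivSum n).symm.trans (finTwoEquiv.symm.prodCongr (Equiv.refl n))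
  have hblocks : (comp (Fin 2) (Fin 2) n n R A).submatrix e e =
      fromBlocks (A 0 0) (A 0 1) (A 1 0) (A 1 1) := by
    ext (i | i) (j | j) <;> rfl
  rw [← hblocks, posSemidef_submatrix_equiv]

end BlockPositivity

section Kraus

variable {R n : Type*} [DecidableEq n]

/-- The symmetrized matrix unit `Eₖₗ + Eₗₖ`; these are the Kraus operators of
`X ↦ 2 ((tr X)·I + Xᵀ)`. The diagonal case `k = l` gives `2 Eₖₖ`. -/
def symmSingle (R : Type*) [Semiring R] (k l : n) : Matrix n n R :=
  single k l 1 + single l k 1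

theorem conjTranspose_symmSingle [Semiring R] [StarRing R] (k l : n) :
    (symmSingle R k l)ᴴ = symmSingle R k l := by
  simp only [symmSingle, conjTranspose_add, conjTranspose_single, star_one, add_comm]

theorem symmSingle_mul_mul_symmSingle [Semiring R] [Fintype n] (X : Matrix n n R) (k l : n) :
    symmSingle R k l * X * symmSingle R k l =
      (single k k (X l l) + single k l (X l k)) + (single l l (X k k) + single l k (X k l)) := by
  simp only [symmSingle, add_mul, mul_add, single_mul_mul_single, one_mul, mul_one]
  abel

theorem sum_single_diag_eq_trace_smul_one [Semiring R] [Fintype n] (X : Matrix n n R) :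
    ∑ k, ∑ l, single k k (X l l) = X.trace • (1 : Matrix n n R) := by
  have hinner (k : n) : ∑ l, single k k (X l l) = single k k X.trace :=
    (map_sum (singleAddMonoidHom (α := R) k k) (fun l => X l l) Finset.univ).symm
  simp only [hinner, sum_single_eq_diagonal, smul_one_eq_diagonal]

theorem sum_symmSingle_mul_mul_symmSingle [Semiring R] [Fintype n] (X : Matrix n n R) :
    ∑ k, ∑ l, symmSingle R k l * X * symmSingle R k l =
      (2 : R) • (X.trace • (1 : Matrix n n R) + Xᵀ) := by
  let G (k l : n) : Matrix n n R := single k k (X l l) + single k l (X l k)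
  have hG : ∑ k, ∑ l, G k l = X.trace • (1 : Matrix n n R) + Xᵀ := by
    simp only [G, Finset.sum_add_distrib, sum_single_diag_eq_trace_smul_one]
    exact congrArg _ (matrix_eq_sum_single Xᵀ).symm
  calc ∑ k, ∑ l, symmSingle R k l * X * symmSingle R k l
      = ∑ k, ∑ l, (G k l + G l k) := by simp only [symmSingle_mul_mul_symmSingle, G]
    _ = ∑ k, ∑ l, G k l + ∑ k, ∑ l, G l k := by simp only [Finset.sum_add_distrib]
    _ = ∑ k, ∑ l, G k l + ∑ k, ∑ l, G k l := by rw [Finset.sum_comm (f := fun k l => G l k)]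
    _ = (2 : R) • (X.trace • (1 : Matrix n n R) + Xᵀ) := by rw [hG, two_smul]

end Kraus

theorem isBlockPositive_trace_smul_one_add_transpose {𝕜 ι n : Type*} [RCLike 𝕜] [Finite ι]
    [Fintype n] [DecidableEq n] :
    IsBlockPositive ι fun X : Matrix n n 𝕜 => X.trace • (1 : Matrix n n 𝕜) + Xᵀ := by
  have hkraus : (fun X : Matrix n n 𝕜 => X.trace • (1 : Matrix n n 𝕜) + Xᵀ) = fun X =>
      (2⁻¹ : 𝕜) • ∑ k, ∑ l, symmSingle 𝕜 k l * X * (symmSingle 𝕜 k l)ᴴ := by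
    funext X
    simp only [conjTranspose_symmSingle]
    rw [sum_symmSingle_mul_mul_symmSingle, inv_smul_smul₀ two_ne_zero]
  rw [hkraus]
  refine IsBlockPositive.const_smul ?_ (inv_nonneg.mpr zero_le_two)
  exact IsBlockPositive.sum fun k _ => IsBlockPositive.sum fun l _ =>
    isBlockPositive_mul_mul_conjTranspose (symmSingle 𝕜 k l)

theorem phi_two_copositive_general {𝕜 ι n : Type*} [RCLike 𝕜] [Finite ι]
    [Fintype n] [DecidableEq n] :
    IsBlockCopositive ι fun X : Matrix n n 𝕜 => X.trace • (1 : Matrix n n 𝕜) + X :=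
  IsBlockPositive.isBlockCopositive <| by
    simpa only [trace_transpose] using isBlockPositive_trace_smul_one_add_transpose

/-- The map `Φ(X) = (tr X)·I + X` is 2-copositive: if `[[A₁₁, A₁₂], [A₂₁, A₂₂]]` is a
positive semidefinite 2×2 block matrix with `n×n` complex blocks, then
`[[(tr A₁₁)I + A₁₁, (tr A₂₁)I + A₂₁], [(tr A₁₂)I + A₁₂, (tr A₂₂)I + A₂₂]]`
is positive semidefinite. -/
theorem phi_two_copositive
    (n : ℕ) (A11 A12 A21 A22 : Matrix (Fin n) (Fin n) ℂ)
    (hA : (Matrix.fromBlocks A11 A12 A21 A22).PosSemidef) :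
    (Matrix.fromBlocks
        (A11.trace • (1 : Matrix (Fin n) (Fin n) ℂ) + A11)
        (A21.trace • (1 : Matrix (Fin n) (Fin n) ℂ) + A21)
        (A12.trace • (1 : Matrix (Fin n) (Fin n) ℂ) + A12)
        (A22.trace • (1 : Matrix (Fin n) (Fin n) ℂ) + A22)).PosSemidef := by
  have hcomp := (posSemidef_comp_fin_two_iff !![A11, A12; A21, A22]).mpr hA
  exact (posSemidef_comp_fin_two_iff _).mp (phi_two_copositive_general _ hcomp)
end

section
/- Let A = [A_{i,j}]_{i,j=1}^m ∈ M_m(M_n) be positive partial transpose (PPT), i.e., both A and its partial transpose A^τ = [A_{j,i}]_{i,j=1}^m are positive semidefinite. Then (tr A)^{mn} + (det(tr₂ A))^n ≥ det A + (det(tr₁ A))^m. -/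
open Matrix BigOperators ComplexOrder

/-!
For positive semidefinite `A` and `B = Cᴴ C` of size `N`, the estimate `x ≤ exp (x - 1)` applied to
the eigenvalues of `C A Cᴴ` gives `det (A B) ≤ exp (tr (A B) - N)`. If `A` is invertible and
`n ≥ 1`, take `B = (tr₂ A)⁻¹ ⊗ 1`: since `tr (A (X ⊗ 1)) = tr (tr₂ A · X)`, this makes `tr (A B)`
equal to `m ≤ m n`, whence `det A ≤ det (tr₂ A) ^ n`. On the other side, the eigenvalues of `tr₁ A`
are at most its trace, which is `tr A`, so `det (tr₁ A) ^ m ≤ (tr A) ^ (m n)`.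
-/

lemma re_pow_of_nonneg {𝕜 : Type*} [RCLike 𝕜] {z : 𝕜} (hz : 0 ≤ z) (k : ℕ) :
    RCLike.re (z ^ k) = RCLike.re z ^ k := by
  obtain ⟨x, -, rfl⟩ := RCLike.nonneg_iff_exists_ofReal.1 hz
  rw [← RCLike.ofReal_pow, RCLike.ofReal_re, RCLike.ofReal_re]

section PartialTrace

variable {ι κ R : Type*}

/-- The first partial trace `∑ i, A_{i,i}` of a block matrix `A = [A_{i,j}]`, where the index
`(i, p)` denotes position `p` inside block `i`. -/
def partialTrace₁ [Fintype ι] [AddCommMonoid R] (A : Matrix (ι × κ) (ι × κ) R) : Matrix κ κ R :=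
  of fun p q => ∑ i, A (i, p) (i, q)

/-- The second partial trace `[tr A_{i,j}]` of a block matrix `A = [A_{i,j}]`, where the index
`(i, p)` denotes position `p` inside block `i`. -/
def partialTrace₂ [Fintype κ] [AddCommMonoid R] (A : Matrix (ι × κ) (ι × κ) R) : Matrix ι ι R :=
  of fun i j => ∑ p, A (i, p) (j, p)

lemma partialTrace₁_eq_sum_submatrix [Fintype ι] [AddCommMonoid R]
    (A : Matrix (ι × κ) (ι × κ) R) :
    partialTrace₁ A = ∑ i, A.submatrix (Prod.mk i) (Prod.mk i) := by
  ext p q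
  simp [partialTrace₁, Matrix.sum_apply]

lemma partialTrace₂_eq_sum_submatrix [Fintype κ] [AddCommMonoid R]
    (A : Matrix (ι × κ) (ι × κ) R) :
    partialTrace₂ A = ∑ p, A.submatrix (·, p) (·, p) := by
  ext i j
  simp [partialTrace₂, Matrix.sum_apply]

lemma trace_partialTrace₁ [Fintype ι] [Fintype κ] [AddCommMonoid R]
    (A : Matrix (ι × κ) (ι × κ) R) : (partialTrace₁ A).trace = A.trace := by
  simp only [trace, diag, partialTrace₁, of_apply, Fintype.sum_prod_type]
  exact Finset.sum_comm

open scoped Kronecker in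
lemma trace_mul_kronecker_one [Fintype ι] [Fintype κ] [DecidableEq κ] [NonAssocSemiring R]
    (A : Matrix (ι × κ) (ι × κ) R) (X : Matrix ι ι R) :
    (A * (X ⊗ₖ (1 : Matrix κ κ R))).trace = (partialTrace₂ A * X).trace := by
  simp only [trace, diag, mul_apply, kroneckerMap_apply, one_apply, mul_ite, mul_one, mul_zero,
    Fintype.sum_prod_type, Finset.sum_ite_eq', Finset.mem_univ, if_true, partialTrace₂, of_apply,
    Finset.sum_mul]
  exact Finset.sum_congr rfl fun i _ => Finset.sum_comm

section Positivity

variable [Ring R] [PartialOrder R] [StarRing R] [AddLeftMono R] {A : Matrix (ι × κ) (ι × κ) R}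

lemma posSemidef_partialTrace₁ [Fintype ι] (hA : A.PosSemidef) :
    (partialTrace₁ A).PosSemidef := by
  rw [partialTrace₁_eq_sum_submatrix]
  exact posSemidef_sum _ fun i _ => hA.submatrix _

lemma posSemidef_partialTrace₂ [Fintype κ] (hA : A.PosSemidef) :
    (partialTrace₂ A).PosSemidef := by
  rw [partialTrace₂_eq_sum_submatrix]
  exact posSemidef_sum _ fun p _ => hA.submatrix _

lemma posDef_partialTrace₂ [Fintype κ] [Nonempty κ] (hA : A.PosDef) :
    (partialTrace₂ A).PosDef := by
  rw [partialTrace₂_eq_sum_submatrix]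
  exact posDef_sum Finset.univ_nonempty fun p _ => hA.submatrix (Prod.mk_left_injective p)

end Positivity

end PartialTrace

section DetTrace

variable {n 𝕜 : Type*} [Fintype n] [DecidableEq n] [RCLike 𝕜] {A B : Matrix n n 𝕜}

lemma det_le_exp_trace_sub_card (hA : A.PosSemidef) :
    A.det ≤ (Real.exp (RCLike.re A.trace - Fintype.card n) : 𝕜) := by
  rw [hA.1.det_eq_prod_eigenvalues, hA.1.trace_eq_sum_eigenvalues, ← RCLike.ofReal_sum,
    RCLike.ofReal_re, ← RCLike.ofReal_prod, RCLike.ofReal_le_ofReal]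
  calc ∏ i, hA.1.eigenvalues i
      ≤ ∏ i, Real.exp (hA.1.eigenvalues i - 1) :=
        Finset.prod_le_prod (fun i _ => hA.eigenvalues_nonneg i) fun i _ => by
          simpa using Real.add_one_le_exp (hA.1.eigenvalues i - 1)
    _ = Real.exp (∑ i, hA.1.eigenvalues i - Fintype.card n) := by
        simp [← Real.exp_sum]

open scoped MatrixOrder in
lemma det_mul_le_exp_trace_mul_sub_card (hA : A.PosSemidef) (hB : B.PosSemidef) :
    (A * B).det ≤ (Real.exp (RCLike.re (A * B).trace - Fintype.card n) : 𝕜) := by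
  obtain ⟨C, rfl⟩ := CStarAlgebra.nonneg_iff_eq_star_mul_self.mp hB.nonneg
  have hdet : (A * (star C * C)).det = (C * A * star C).det := by
    simp only [det_mul]
    ring
  have htrace : (A * (star C * C)).trace = (C * A * star C).trace := by
    rw [← Matrix.mul_assoc, trace_mul_comm, Matrix.mul_assoc]
  rw [hdet, htrace]
  exact det_le_exp_trace_sub_card (hA.mul_mul_conjTranspose_same C)

lemma det_le_trace_pow_card (hA : A.PosSemidef) : A.det ≤ A.trace ^ Fintype.card n := by
  rw [hA.1.det_eq_prod_eigenvalues, hA.1.trace_eq_sum_eigenvalues, ← RCLike.ofReal_sum,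
    ← RCLike.ofReal_prod, ← RCLike.ofReal_pow, RCLike.ofReal_le_ofReal]
  calc ∏ i, hA.1.eigenvalues i
      ≤ ∏ _i : n, ∑ j, hA.1.eigenvalues j :=
        Finset.prod_le_prod (fun i _ => hA.eigenvalues_nonneg i) fun i hi =>
          Finset.single_le_sum (fun j _ => hA.eigenvalues_nonneg j) hi
    _ = (∑ j, hA.1.eigenvalues j) ^ Fintype.card n := by
        rw [Finset.prod_const, Finset.card_univ]

end DetTrace

section BlockMatrix

variable {ι κ 𝕜 : Type*} [Fintype ι] [Fintype κ] [DecidableEq κ] [RCLike 𝕜]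
  {A : Matrix (ι × κ) (ι × κ) 𝕜}

lemma det_partialTrace₁_pow_le_trace_pow (hA : A.PosSemidef) :
    (partialTrace₁ A).det ^ Fintype.card ι
      ≤ A.trace ^ (Fintype.card ι * Fintype.card κ) := by
  have hpos := posSemidef_partialTrace₁ hA
  rw [mul_comm, pow_mul, ← trace_partialTrace₁]
  exact pow_le_pow_left₀ hpos.det_nonneg (det_le_trace_pow_card hpos) _

variable [DecidableEq ι]

open scoped Kronecker in
lemma det_le_det_partialTrace₂_pow_of_posDef [Nonempty κ] (hA : A.PosDef) :
    A.det ≤ (partialTrace₂ A).det ^ Fintype.card κ := by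
  set T := partialTrace₂ A with hT
  have hTpos : T.PosDef := posDef_partialTrace₂ hA
  have hTdet : IsUnit T.det := (isUnit_iff_isUnit_det T).1 hTpos.isUnit
  have hdet : (A * (T⁻¹ ⊗ₖ (1 : Matrix κ κ 𝕜))).det = A.det * (T.det ^ Fintype.card κ)⁻¹ := by
    simp [det_mul, det_kronecker, det_nonsing_inv]
  have htrace : (A * (T⁻¹ ⊗ₖ (1 : Matrix κ κ 𝕜))).trace = Fintype.card ι := by
    rw [trace_mul_kronecker_one, ← hT, mul_nonsing_inv T hTdet, trace_one]
  have hcard : (Fintype.card ι : ℝ) ≤ Fintype.card (ι × κ) := by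
    rw [Fintype.card_prod]
    exact_mod_cast Nat.le_mul_of_pos_right _ Fintype.card_pos
  have hexp := det_mul_le_exp_trace_mul_sub_card hA.posSemidef
    (hTpos.inv.posSemidef.kronecker (PosSemidef.one (n := κ)))
  rw [hdet, htrace, RCLike.natCast_re] at hexp
  have hle : A.det * (T.det ^ Fintype.card κ)⁻¹ ≤ 1 :=
    hexp.trans (by exact_mod_cast Real.exp_le_one_iff.2 (sub_nonpos.2 hcard))
  simpa using (mul_inv_le_iff₀ (pow_pos hTpos.det_pos _)).1 hle

lemma det_le_det_partialTrace₂_pow (hA : A.PosSemidef) :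
    A.det ≤ (partialTrace₂ A).det ^ Fintype.card κ := by
  by_cases hdet : A.det = 0
  · rw [hdet]
    exact pow_nonneg (posSemidef_partialTrace₂ hA).det_nonneg _
  cases isEmpty_or_nonempty κ
  · simp
  · exact det_le_det_partialTrace₂_pow_of_posDef (hA.posDef_iff_det_ne_zero.2 hdet)

end BlockMatrix

theorem trace_pow_add_det_trace2_ge_det_add_det_trace1_of_ppt_general
    {ι κ 𝕜 : Type*} [Fintype ι] [Fintype κ] [DecidableEq ι] [DecidableEq κ] [RCLike 𝕜]
    {A : Matrix (ι × κ) (ι × κ) 𝕜} (hA : A.PosSemidef) :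
    RCLike.re A.det + RCLike.re (partialTrace₁ A).det ^ Fintype.card ι
      ≤ RCLike.re A.trace ^ (Fintype.card ι * Fintype.card κ)
        + RCLike.re (partialTrace₂ A).det ^ Fintype.card κ := by
  rw [← re_pow_of_nonneg (posSemidef_partialTrace₁ hA).det_nonneg,
    ← re_pow_of_nonneg (posSemidef_partialTrace₂ hA).det_nonneg,
    ← re_pow_of_nonneg hA.trace_nonneg, add_comm]
  exact add_le_add (RCLike.re_monotone (det_partialTrace₁_pow_le_trace_pow hA))
    (RCLike.re_monotone (det_le_det_partialTrace₂_pow hA))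

/-- **Proposition 2.4.** If `A = [A_{i,j}] ∈ M_m(M_n)` is PPT (both `A` and its partial
transpose `A^τ = [A_{j,i}]` are positive semidefinite), then
`(tr A)^{mn} + det(tr₂ A)^n ≥ det A + det(tr₁ A)^m`. -/
theorem trace_pow_add_det_trace2_ge_det_add_det_trace1_of_ppt
    (m n : ℕ) (A : Matrix (Fin m × Fin n) (Fin m × Fin n) ℂ)
    (hA : A.PosSemidef)
    (hAτ : (Matrix.of fun p q : Fin m × Fin n => A (q.1, p.2) (p.1, q.2)).PosSemidef) :
    A.det.re + ((Matrix.of fun p q : Fin n => ∑ k : Fin m, A (k, p) (k, q)).det.re) ^ m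
      ≤ A.trace.re ^ (m * n)
        + ((Matrix.of fun i j : Fin m => ∑ r : Fin n, A (i, r) (j, r)).det.re) ^ n := by
  simpa only [Fintype.card_fin, RCLike.re_to_complex, partialTrace₁, partialTrace₂] using
    trace_pow_add_det_trace2_ge_det_add_det_trace1_of_ppt_general hA
end

section
/- Let A = [A_{i,j}]_{i,j=1}^m ∈ M_m(M_n) be positive semidefinite. Then (tr A)·I_m − tr₂ A is positive semidefinite, where tr₂ A = [tr A_{i,j}]_{i,j=1}^m ∈ M_m is the second partial trace. -/
open Matrix BigOperators ComplexOrder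

/-!
Reading the blocks of `A` along the diagonal of the second factor exhibits `tr₂ A` as a sum of
principal submatrices of `A`, so it is positive semidefinite, and it has the same trace as `A`. It
remains to see that the reduction map `B ↦ (tr B)·1 - B` preserves positive semidefiniteness. Its
composition with the transpose has the Kraus form
`(tr B)·1 - Bᵀ = ∑_{i < j} K_{i,j} B K_{i,j}ᴴ`, where `K_{i,j} = E_{i,j} - E_{j,i}`.
-/

section SkewUnit

variable {ι R : Type*} [DecidableEq ι] [Ring R]

/-- The elementary skew-symmetric matrix `E_{i,j} - E_{j,i}`, which is `0` for `i = j`. For `i < j`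
these are the Kraus operators of the map `B ↦ (tr B)·1 - Bᵀ`. -/
def skewUnit (R : Type*) [Ring R] (i j : ι) : Matrix ι ι R := single i j 1 - single j i 1

theorem conjTranspose_skewUnit [StarRing R] (i j : ι) : (skewUnit R i j)ᴴ = skewUnit R j i := by
  simp only [skewUnit, conjTranspose_sub, conjTranspose_single, star_one]

theorem skewUnit_mul_mul_skewUnit_swap [Fintype ι] (B : Matrix ι ι R) (i j : ι) :
    skewUnit R i j * B * skewUnit R j i =
      (single j j (B i i) - single j i (B i j)) + (single i i (B j j) - single i j (B j i)) := by
  simp only [skewUnit, sub_mul, mul_sub, single_mul_mul_single, one_mul, mul_one]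
  abel

end SkewUnit

section ReductionMap

variable {ι R : Type*} [Fintype ι]

theorem sum_sum_single_diag [DecidableEq ι] [NonAssocSemiring R] (B : Matrix ι ι R) :
    ∑ i, ∑ j, single i i (B j j) = B.trace • (1 : Matrix ι ι R) := by
  simp only [← singleAddMonoidHom_apply, ← map_sum]
  rw [smul_one_eq_diagonal]
  exact sum_single_eq_diagonal fun _ => B.trace

theorem sum_lt_add_swap_eq_sum_sum [LinearOrder ι] {M : Type*} [AddCommMonoid M] {f : ι → ι → M}
    (f_self : ∀ i, f i i = 0) : ∑ i, ∑ j with i < j, (f j i + f i j) = ∑ i, ∑ j, f i j := by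
  have split_by_order (i j : ι) : (if j < i then f i j else 0) + (if i < j then f i j else 0) =
      f i j := by
    rcases lt_trichotomy i j with h | rfl | h
    · simp only [h, h.not_gt, if_true, if_false, zero_add]
    · simp only [lt_irrefl, if_false, f_self, add_zero]
    · simp only [h, h.not_gt, if_true, if_false, add_zero]
  calc ∑ i, ∑ j with i < j, (f j i + f i j)
      = ∑ i, ∑ j, (if i < j then f j i else 0) + ∑ i, ∑ j, (if i < j then f i j else 0) := by
        simp only [Finset.sum_add_distrib, Finset.sum_filter]
    _ = ∑ i, ∑ j, (if j < i then f i j else 0) + ∑ i, ∑ j, (if i < j then f i j else 0) := by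
        rw [Finset.sum_comm]
    _ = ∑ i, ∑ j, f i j := by
        simp only [← Finset.sum_add_distrib, split_by_order]

theorem sum_skewUnit_mul_mul_conjTranspose [LinearOrder ι] [Ring R] [StarRing R]
    (B : Matrix ι ι R) :
    ∑ i, ∑ j with i < j, skewUnit R i j * B * (skewUnit R i j)ᴴ =
      B.trace • (1 : Matrix ι ι R) - Bᵀ := by
  let f (i j : ι) : Matrix ι ι R := single i i (B j j) - single i j (B j i)
  calc ∑ i, ∑ j with i < j, skewUnit R i j * B * (skewUnit R i j)ᴴ
      = ∑ i, ∑ j with i < j, (f j i + f i j) := by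
        simp only [conjTranspose_skewUnit, skewUnit_mul_mul_skewUnit_swap, f]
    _ = ∑ i, ∑ j, f i j := sum_lt_add_swap_eq_sum_sum fun _ => sub_self _
    _ = ∑ i, ∑ j, single i i (B j j) - ∑ i, ∑ j, single i j (Bᵀ i j) := by
        simp only [f, Finset.sum_sub_distrib, transpose_apply]
    _ = B.trace • (1 : Matrix ι ι R) - Bᵀ := by
        rw [sum_sum_single_diag, ← matrix_eq_sum_single]

theorem posSemidef_trace_smul_one_sub_transpose [DecidableEq ι] [Ring R] [PartialOrder R]
    [StarRing R] [AddLeftMono R] {B : Matrix ι ι R} (hB : B.PosSemidef) :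
    (B.trace • (1 : Matrix ι ι R) - Bᵀ).PosSemidef := by
  obtain ⟨_, -⟩ := exists_wellFoundedLT ι
  obtain rfl : ‹DecidableEq ι› = LinearOrder.toDecidableEq := Subsingleton.elim _ _
  rw [← sum_skewUnit_mul_mul_conjTranspose]
  exact posSemidef_sum _ fun i _ => posSemidef_sum _ fun j _ => hB.mul_mul_conjTranspose_same _

theorem posSemidef_trace_smul_one_sub [DecidableEq ι] [CommRing R] [PartialOrder R]
    [StarRing R] [AddLeftMono R] {B : Matrix ι ι R} (hB : B.PosSemidef) :
    (B.trace • (1 : Matrix ι ι R) - B).PosSemidef := by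
  simpa only [trace_transpose, transpose_transpose] using
    posSemidef_trace_smul_one_sub_transpose hB.transpose

end ReductionMap

section PartialTrace

variable {ι κ R : Type*} [Fintype κ]

/-- The second partial trace `tr₂ A = [tr A_{i,j}]` of a block matrix `A = [A_{i,j}]`, whose block
`A_{i,j}` has the entries `A (i, r) (j, s)`. -/
def partialTraceRight [AddCommMonoid R] (A : Matrix (ι × κ) (ι × κ) R) : Matrix ι ι R :=
  Matrix.of fun i j => ∑ r, A (i, r) (j, r)

theorem partialTraceRight_eq_sum_submatrix [AddCommMonoid R] (A : Matrix (ι × κ) (ι × κ) R) :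
    partialTraceRight A = ∑ r, A.submatrix (·, r) (·, r) := by
  ext i j
  simp only [partialTraceRight, of_apply, Matrix.sum_apply, submatrix_apply]

theorem trace_partialTraceRight [Fintype ι] [AddCommMonoid R] (A : Matrix (ι × κ) (ι × κ) R) :
    (partialTraceRight A).trace = A.trace :=
  (Fintype.sum_prod_type fun p => A p p).symm

theorem posSemidef_partialTraceRight [Ring R] [PartialOrder R] [StarRing R] [AddLeftMono R]
    {A : Matrix (ι × κ) (ι × κ) R} (hA : A.PosSemidef) : (partialTraceRight A).PosSemidef := by
  rw [partialTraceRight_eq_sum_submatrix]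
  exact posSemidef_sum _ fun r _ => hA.submatrix (·, r)

theorem trace_smul_one_sub_trace2_posSemidef_general [Fintype ι] [DecidableEq ι] [CommRing R]
    [PartialOrder R] [StarRing R] [AddLeftMono R] {A : Matrix (ι × κ) (ι × κ) R}
    (hA : A.PosSemidef) : (A.trace • (1 : Matrix ι ι R) - partialTraceRight A).PosSemidef := by
  rw [← trace_partialTraceRight]
  exact posSemidef_trace_smul_one_sub (posSemidef_partialTraceRight hA)

end PartialTrace

/-- For a positive semidefinite block matrix `A = [A_{i,j}] ∈ M_m(M_n)`,
`(tr A)·I_m - tr₂ A` is positive semidefinite, where `tr₂ A = [tr A_{i,j}] ∈ M_m`. -/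
theorem trace_smul_one_sub_trace2_posSemidef
    (m n : ℕ) (A : Matrix (Fin m × Fin n) (Fin m × Fin n) ℂ)
    (hA : A.PosSemidef) :
    (A.trace • (1 : Matrix (Fin m) (Fin m) ℂ)
      - Matrix.of fun i j : Fin m => ∑ r : Fin n, A (i, r) (j, r)).PosSemidef :=
  trace_smul_one_sub_trace2_posSemidef_general hA
end
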